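/- arXiv:1607.01836 — 2 statements merged into one kernel-verified Lean document; each statement's English description precedes it below -/
import Mathlib

section
/- Let M be a nonempty closed convex subset of a Banach space X, F₁: X → X a bounded linear operator with spectral radius r(F₁) < 1, and F₂: M → X a compact mapping (continuous with F₂(M) contained in a compact set). Assume that whenever x = F₁(x) + F₂(y) for some y ∈ M, we have x ∈ M. Then F₁ + F₂ has a fixed point in M. -/
open Filter

/-!
Since `‖F₁ ^ k‖ < 1` for some `k ≥ 1` and `1 - F₁ ^ k = (1 - F₁) (1 + F₁ + ⋯ + F₁ ^ (k - 1))`, the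
operator `1 - F₁` is invertible. The fixed points of `F₁ + F₂` are those of `(1 - F₁)⁻¹ ∘ F₂`, a
continuous map with relatively compact range which the invariance hypothesis sends `M` into `M`, so
Schauder's theorem (`schauder`) applies.

Schauder's theorem follows from Brouwer's theorem on the standard simplex: the Schauder projection
onto the convex hull of a finite `ε`-net of the range gives a point moved by at most `ε`, and
compactness lets `ε` tend to `0`.

Brouwer's theorem is proved by Scarf's method, which needs no triangulation. `Scarf.scarf` is a
parity statement about a finite set with one linear order per label: every labelling that is correct
on the dummy elements admits a dominating set carrying all labels. Applied to the grid points of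
mesh `1 / N`, with the orders refining the coordinates and a point `p` labelled by some `i` with
`p i ≤ f p i`, dominance forces the elements of the set to lie within `card I / N` of each other.
Such a set gives `p` with `p k ≤ f p k + ε` for all `k` (`brouwer_approx`). By compactness
some `p` satisfies `p ≤ f p` coordinatewise, and equality holds as both sides sum to `1`.
-/

/-! ### Scarf's combinatorial lemma -/

namespace Scarf

/-- `A` is dominating for the orderings by `r i` if no `y` is, for every `i`, strictly above
some element of `A`: each `y` is at most all of `A` for at least one index `i`. Dominating sets with
`card I` elements are the rooms of Scarf's argument, those with `card I - 1` elements its doors. -/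
def Dom {I V α : Type*} [LinearOrder α] (r : I → V → α) (A : Finset V) : Prop :=
  ∀ y, ∃ i, ∀ a ∈ A, r i y ≤ r i a

lemma Dom.mono {I V α : Type*} [LinearOrder α] {r : I → V → α} {A B : Finset V}
    (h : Dom r A) (hBA : B ⊆ A) : Dom r B := fun y =>
  (h y).imp fun _ hi a ha => hi a (hBA ha)

lemma card_max {V α : Type*} [LinearOrder α] (f : V → α)
    (hf : Function.Injective f) (S : Finset V) [DecidablePred fun y => ∀ z ∈ S, f z ≤ f y]
    (hS : S.Nonempty) :
    (S.filter fun y => ∀ z ∈ S, f z ≤ f y).card = 1 := by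
  obtain ⟨y, hy, hmax⟩ := S.exists_max_image f hS
  refine Finset.card_eq_one.2 ⟨y, ?_⟩
  ext z
  simp only [Finset.mem_filter, Finset.mem_singleton]
  constructor
  · rintro ⟨hz, h⟩
    exact hf (le_antisymm (hmax z hz) (h y hy))
  · rintro rfl
    exact ⟨hy, hmax⟩

open Classical in
/-- The rooms containing a nonempty door `B`. Let `m k` be the `k`-least element of `B`. As `m`
maps onto `B` and `B` has one element fewer than `I`, there are `i ≠ j` with `m i = m j`. A room
`insert y B` arises exactly when, for `k = i` or `k = j`, `y` is `k`-maximal in the set `S k` of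
those elements which are `l`-above `m l` for all `l ≠ k`. There is at most one room for each of the
two choices of `k`. -/
lemma exists_door_data {I V α : Type*} [Fintype I] [Fintype V] [DecidableEq I] [DecidableEq V]
    [LinearOrder α] (r : I → V → α) (hr : ∀ i, Function.Injective (r i))
    (B : Finset V) (hB : Dom r B) (hne : B.Nonempty) (hcard : B.card + 1 = Fintype.card I) :
    ∃ (m : I → V) (i j : I), (∀ k, m k ∈ B) ∧ (∀ k, ∀ b ∈ B, r k (m k) ≤ r k b) ∧
      i ≠ j ∧ m i = m j ∧
      ∀ S : I → Finset V, (∀ k y, y ∈ S k ↔ ∀ l, l ≠ k → r l (m l) < r l y) →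
        (Finset.univ.filter fun y => y ∉ B ∧ Dom r (insert y B)).card =
          ((S i).filter fun y => ∀ z ∈ S i, r i z ≤ r i y).card +
          ((S j).filter fun y => ∀ z ∈ S j, r j z ≤ r j y).card := by
  -- `m k` is the least element of `B` for the order `k`.
  have hm : ∀ k, ∃ b ∈ B, ∀ b' ∈ B, r k b ≤ r k b' := fun k => B.exists_min_image (r k) hne
  choose m hmB hmin using hm
  have hsurj : ∀ b ∈ B, ∃ k, m k = b := by
    intro b hb
    obtain ⟨k, hk⟩ := hB b
    exact ⟨k, hr k (le_antisymm (hmin k b hb) (hk _ (hmB k)))⟩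
  obtain ⟨i, -, j, -, hij, hmij⟩ := Finset.exists_ne_map_eq_of_card_lt_of_maps_to
    (s := (Finset.univ : Finset I)) (t := B) (by rw [Finset.card_univ]; omega)
    (f := m) (fun k _ => hmB k)
  refine ⟨m, i, j, hmB, hmin, hij, hmij, fun S hS => ?_⟩
  have hdisj : ∀ y, y ∈ S i → y ∈ S j → False := by
    intro y h1 h2
    obtain ⟨l, hl⟩ := hB y
    have h3 := hl _ (hmB l)
    by_cases hli : l = i
    · exact absurd ((hS j y).1 h2 l (by rw [hli]; exact hij)) (not_lt.2 h3)
    · exact absurd ((hS i y).1 h1 l hli) (not_lt.2 h3)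
  have key : ∀ k k', k ≠ k' → m k = m k' → ∀ y ∈ S k, (∀ z ∈ S k, r k z ≤ r k y) →
      y ∉ B ∧ Dom r (insert y B) := by
    intro k k' hkk hmk y hy hmax
    have hy' := (hS k y).1 hy
    constructor
    · intro hyB
      obtain ⟨p, hp⟩ := hsurj y hyB
      by_cases hpk : p = k
      · have := hy' k' hkk.symm
        rw [← hmk, ← hpk, hp] at this
        exact lt_irrefl _ this
      · have := hy' p hpk
        rw [hp] at this
        exact lt_irrefl _ this
    · intro z
      by_cases hz : z ∈ S k
      · have hz' := (hS k z).1 hz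
        obtain ⟨l, hl⟩ := hB z
        have hlk : l = k := by
          by_contra h
          exact absurd (hz' l h) (not_lt.2 (hl _ (hmB l)))
        subst hlk
        refine ⟨l, fun a ha => ?_⟩
        rcases Finset.mem_insert.1 ha with rfl | ha
        · exact hmax z hz
        · exact hl a ha
      · rw [hS] at hz
        push Not at hz
        obtain ⟨l, hlk, hl⟩ := hz
        refine ⟨l, fun a ha => ?_⟩
        rcases Finset.mem_insert.1 ha with rfl | ha
        · exact hl.trans (hy' l hlk).le
        · exact hl.trans (hmin l a ha)
  rw [← Finset.card_union_of_disjoint]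
  · congr 1
    ext y
    simp only [Finset.mem_filter, Finset.mem_univ, true_and, Finset.mem_union]
    constructor
    · rintro ⟨hyB, hD⟩
      -- Each `a` in the room is least there for the order `κ a`, and `κ` is a bijection onto `I`.
      choose κ hκ using hD
      have hinj : Set.InjOn κ (insert y B : Finset V) := by
        intro a ha b hb hab
        refine hr (κ a) (le_antisymm (hκ a b hb) ?_)
        rw [hab]
        exact hκ b a ha
      have hκsurj : ∀ l : I, ∃ b ∈ insert y B, κ b = l := by
        have him : (insert y B).image κ = Finset.univ := by
          apply Finset.eq_univ_of_card
          rw [Finset.card_image_of_injOn hinj, Finset.card_insert_of_notMem hyB, hcard]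
        intro l
        have := Finset.mem_univ l
        rw [← him, Finset.mem_image] at this
        exact this
      have hmκ : ∀ l, l ≠ κ y → κ (m l) = l ∧ r l (m l) < r l y := by
        intro l hl
        obtain ⟨b, hb, rfl⟩ := hκsurj l
        have hbB : b ∈ B := by
          rcases Finset.mem_insert.1 hb with rfl | hb
          · exact absurd rfl hl
          · exact hb
        have hmb : m (κ b) = b := hr (κ b) (le_antisymm (hmin _ b hbB)
          (hκ b _ (Finset.mem_insert_of_mem (hmB _))))
        rw [hmb]
        refine ⟨rfl, lt_of_le_of_ne (hκ b y (Finset.mem_insert_self _ _)) fun h => ?_⟩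
        exact hyB ((hr _ h) ▸ hbB)
      have hyS : y ∈ S (κ y) := (hS _ _).2 fun l hl => (hmκ l hl).2
      have hymax : ∀ z ∈ S (κ y), r (κ y) z ≤ r (κ y) y := by
        intro z hz
        have hz' := (hS _ _).1 hz
        have hzl : κ z = κ y := by
          by_contra h
          exact absurd (hz' _ h)
            (not_lt.2 (hκ z _ (Finset.mem_insert_of_mem (hmB _))))
        rw [← hzl]
        exact hκ z y (Finset.mem_insert_self _ _)
      have hk : κ y = i ∨ κ y = j := by
        by_contra h
        push Not at h
        have h1 := (hmκ i h.1.symm).1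
        have h2 := (hmκ j h.2.symm).1
        rw [hmij, h2] at h1
        exact hij h1.symm
      rcases hk with hk | hk
      · rw [hk] at hyS hymax
        exact Or.inl ⟨hyS, hymax⟩
      · rw [hk] at hyS hymax
        exact Or.inr ⟨hyS, hymax⟩
    · rintro (⟨h1, h2⟩ | ⟨h1, h2⟩)
      · exact key i j hij hmij y h1 h2
      · exact key j i hij.symm hmij.symm y h1 h2
  · rw [Finset.disjoint_left]
    intro y h1 h2
    exact hdisj y (Finset.mem_filter.1 h1).1 (Finset.mem_filter.1 h2).1

/-- A set `A` of `card I` elements missing some label has zero or two elements whose removal leaves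
exactly the labels other than `i₀`: if there is one, then exactly one label is repeated, and the two
elements bearing it are the ones sought. -/
lemma even_doors_of_room {I V : Type*} [Fintype I] [DecidableEq I] [DecidableEq V]
    (c : V → I) (i₀ : I) (A : Finset V) (hA : A.card = Fintype.card I)
    (hnc : A.image c ≠ Finset.univ) :
    Even (A.filter fun x => (A.erase x).image c = Finset.univ.erase i₀).card := by
  rcases (A.filter fun x => (A.erase x).image c = Finset.univ.erase i₀).eq_empty_or_nonempty
    with h | ⟨x₀, hx₀⟩
  · simp [h]
  obtain ⟨hx₀A, him⟩ := Finset.mem_filter.1 hx₀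
  have hinj : Set.InjOn c (A.erase x₀ : Finset V) := by
    apply Finset.injOn_of_card_image_eq
    rw [him, Finset.card_erase_of_mem hx₀A, Finset.card_erase_of_mem (Finset.mem_univ _), hA,
      Finset.card_univ]
  have hcx₀ : c x₀ ≠ i₀ := by
    intro h
    apply hnc
    rw [← Finset.insert_erase hx₀A, Finset.image_insert, him, h,
      Finset.insert_erase (Finset.mem_univ _)]
  have hx1 : c x₀ ∈ (A.erase x₀).image c := by
    rw [him]; exact Finset.mem_erase.2 ⟨hcx₀, Finset.mem_univ _⟩
  obtain ⟨x₁, hx₁, hc⟩ := Finset.mem_image.1 hx1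
  have hx₁' := Finset.mem_erase.1 hx₁
  have : (A.filter fun x => (A.erase x).image c = Finset.univ.erase i₀) = {x₀, x₁} := by
    ext x
    simp only [Finset.mem_filter, Finset.mem_insert, Finset.mem_singleton]
    constructor
    · rintro ⟨hx, hxim⟩
      by_cases hxx : x = x₀
      · exact Or.inl hxx
      right
      have hxe : x ∈ A.erase x₀ := Finset.mem_erase.2 ⟨hxx, hx⟩
      have h1 : c x ∈ (A.erase x).image c := by
        rw [hxim, ← him]; exact Finset.mem_image_of_mem c hxe
      obtain ⟨x', hx', hcx'⟩ := Finset.mem_image.1 h1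
      have hx'' := Finset.mem_erase.1 hx'
      have : x' = x₀ := by
        by_contra h
        exact hx''.1 (hinj (Finset.mem_coe.2 (Finset.mem_erase.2 ⟨h, hx''.2⟩))
          (Finset.mem_coe.2 hxe) hcx')
      exact hinj (Finset.mem_coe.2 hxe) (Finset.mem_coe.2 hx₁) (by rw [hc, ← hcx', this])
    · rintro (rfl | rfl)
      · exact ⟨hx₀A, him⟩
      · refine ⟨hx₁'.2, ?_⟩
        rw [← him]
        ext k
        simp only [Finset.mem_image, Finset.mem_erase]
        constructor
        · rintro ⟨a, ⟨ha, haA⟩, rfl⟩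
          by_cases h : a = x₀
          · exact ⟨x, hx₁', by rw [h, hc]⟩
          · exact ⟨a, ⟨h, haA⟩, rfl⟩
        · rintro ⟨a, ⟨ha, haA⟩, rfl⟩
          by_cases h : a = x
          · exact ⟨x₀, ⟨hx₁'.1.symm, hx₀A⟩, by rw [h, hc]⟩
          · exact ⟨a, ⟨h, haA⟩, rfl⟩
  rw [this, Finset.card_pair hx₁'.1.symm]
  exact even_two

/-- Scarf's lemma. The elements `d i` are dummies: `d i` is labelled `i`, is least for the order
`i`, and is above all non-dummies for the other orders. If there is a non-dummy `t`, some dominating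
set carries all labels.

Incidences between rooms and the doors labelled by `univ.erase i₀` are counted in two ways. Such a
door lies in two rooms, except that the door of the dummies `d l`, `l ≠ i₀`, lies in one. Hence the
count is odd, whereas rooms missing a label contribute evenly. -/
theorem scarf {I V α : Type*} [Fintype I] [Fintype V] [LinearOrder α]
    [Nonempty I] (r : I → V → α) (hr : ∀ i, Function.Injective (r i))
    (c : V → I) (d : I → V) (hcd : ∀ i, c (d i) = i)
    (hmin : ∀ i v, r i (d i) ≤ r i v)
    (hmax : ∀ i j v, j ≠ i → v ∉ Set.range d → r i v < r i (d j))
    (t : V) (ht : t ∉ Set.range d) :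
    ∃ A : Finset V, Dom r A ∧ ∀ i, ∃ a ∈ A, c a = i := by
  classical
  obtain ⟨i₀⟩ := ‹Nonempty I›
  -- With a single label the only door is empty, and the room is a greatest element.
  by_cases hsub : Subsingleton I
  · obtain ⟨a, -, ha⟩ := (Finset.univ : Finset V).exists_max_image (r i₀) ⟨t, Finset.mem_univ _⟩
    refine ⟨{a}, fun y => ⟨i₀, ?_⟩, fun i => ⟨a, by simp, Subsingleton.elim _ _⟩⟩
    simpa using ha y (Finset.mem_univ _)
  rw [not_subsingleton_iff_nontrivial] at hsub
  have hI : 1 < Fintype.card I := Fintype.one_lt_card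
  have hdinj : Function.Injective d := fun i j h => by rw [← hcd i, h, hcd]
  by_contra hcon
  push Not at hcon
  set Doors : Finset (Finset V) := Finset.univ.filter fun B =>
    Dom r B ∧ B.card + 1 = Fintype.card I ∧ B.image c = Finset.univ.erase i₀ with hDoors
  set Rooms : Finset (Finset V) := Finset.univ.filter fun A =>
    Dom r A ∧ A.card = Fintype.card I with hRooms
  have hcount := Finset.sum_card_bipartiteAbove_eq_sum_card_bipartiteBelow
    (s := Doors) (t := Rooms) (fun B A => B ⊆ A)
  have hroom : Even (∑ A ∈ Rooms, (Doors.bipartiteBelow (fun B A => B ⊆ A) A).card) := by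
    refine Finset.even_sum _ fun A hA => ?_
    obtain ⟨-, hAD, hAc⟩ := Finset.mem_filter.1 hA
    have hnc : A.image c ≠ Finset.univ := by
      intro h
      obtain ⟨i, hi⟩ := hcon A hAD
      have := Finset.mem_univ i
      rw [← h] at this
      obtain ⟨a, ha, hai⟩ := Finset.mem_image.1 this
      exact hi a ha hai
    have := even_doors_of_room c i₀ A hAc hnc
    suffices heq : (A.filter fun x => (A.erase x).image c = Finset.univ.erase i₀).card =
        (Doors.bipartiteBelow (fun B A => B ⊆ A) A).card by
      rwa [← heq]
    refine Finset.card_bij (fun x _ => A.erase x) ?_ ?_ ?_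
    · intro x hx
      obtain ⟨hxA, hx⟩ := Finset.mem_filter.1 hx
      simp only [Finset.bipartiteBelow, hDoors, Finset.mem_filter, Finset.mem_univ, true_and]
      refine ⟨⟨hAD.mono (Finset.erase_subset _ _), ?_, hx⟩, Finset.erase_subset _ _⟩
      rw [Finset.card_erase_add_one hxA, hAc]
    · intro x hx y hy h
      exact Finset.erase_injOn A (Finset.mem_filter.1 hx).1 (Finset.mem_filter.1 hy).1 h
    · intro B hB
      simp only [Finset.bipartiteBelow, hDoors, Finset.mem_filter, Finset.mem_univ, true_and] at hB
      obtain ⟨⟨-, hBc, hBi⟩, hBA⟩ := hB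
      obtain ⟨x, hx⟩ : ∃ x, A \ B = {x} := by
        apply Finset.card_eq_one.1
        rw [Finset.card_sdiff_of_subset hBA]; omega
      have hxA : x ∈ A \ B := by rw [hx]; simp
      have hxB : A.erase x = B := by
        rw [← Finset.sdiff_singleton_eq_erase, ← hx, Finset.sdiff_sdiff_eq_self hBA]
      exact ⟨x, Finset.mem_filter.2 ⟨(Finset.mem_sdiff.1 hxA).1, by rw [hxB, hBi]⟩, hxB⟩
  have hdoorcard : ∀ B ∈ Doors, (Rooms.bipartiteAbove (fun B A => B ⊆ A) B).card =
      (Finset.univ.filter fun y => y ∉ B ∧ Dom r (insert y B)).card := by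
    intro B hB
    obtain ⟨-, hBD, hBc, hBi⟩ := Finset.mem_filter.1 hB
    symm
    refine Finset.card_bij (fun y _ => insert y B) ?_ ?_ ?_
    · intro y hy
      obtain ⟨-, hy, hD⟩ := Finset.mem_filter.1 hy
      simp only [Finset.bipartiteAbove, hRooms, Finset.mem_filter, Finset.mem_univ, true_and]
      exact ⟨⟨hD, by rw [Finset.card_insert_of_notMem hy, hBc]⟩, Finset.subset_insert _ _⟩
    · intro x hx y hy h
      obtain ⟨-, hx, -⟩ := Finset.mem_filter.1 hx
      exact (Finset.insert_inj hx).1 h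
    · intro A hA
      simp only [Finset.bipartiteAbove, hRooms, Finset.mem_filter, Finset.mem_univ, true_and] at hA
      obtain ⟨⟨hAD, hAc⟩, hBA⟩ := hA
      obtain ⟨x, hx⟩ : ∃ x, A \ B = {x} := by
        apply Finset.card_eq_one.1
        rw [Finset.card_sdiff_of_subset hBA]; omega
      have hxA : x ∈ A \ B := by rw [hx]; simp
      have hxB : insert x B = A := by
        rw [Finset.insert_eq, ← hx, Finset.sdiff_union_of_subset hBA]
      exact ⟨x, Finset.mem_filter.2 ⟨Finset.mem_univ _, (Finset.mem_sdiff.1 hxA).2,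
        by rw [hxB]; exact hAD⟩, hxB⟩
  set B₀ : Finset V := (Finset.univ.erase i₀).image d with hB₀
  have hB₀mem : B₀ ∈ Doors := by
    refine Finset.mem_filter.2 ⟨Finset.mem_univ _, ?_, ?_, ?_⟩
    · intro y
      by_cases hy : y ∈ Set.range d
      · obtain ⟨p, rfl⟩ := hy
        exact ⟨p, fun a _ => hmin p a⟩
      · refine ⟨i₀, fun a ha => ?_⟩
        obtain ⟨l, hl, rfl⟩ := Finset.mem_image.1 ha
        exact (hmax i₀ l y (Finset.mem_erase.1 hl).1 hy).le
    · rw [hB₀, Finset.card_image_of_injective _ hdinj,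
        Finset.card_erase_add_one (Finset.mem_univ _), Finset.card_univ]
    · rw [hB₀, Finset.image_image]
      have : c ∘ d = id := funext hcd
      rw [this, Finset.image_id]
  have hBne : ∀ B ∈ Doors, B.Nonempty := by
    intro B hB
    obtain ⟨-, hBD, hBc, hBi⟩ := Finset.mem_filter.1 hB
    exact Finset.card_pos.1 (by omega)
  have hother : ∀ B ∈ Doors, B ≠ B₀ →
      (Finset.univ.filter fun y => y ∉ B ∧ Dom r (insert y B)).card = 2 := by
    intro B hB hBB₀
    have hBn := hBne B hB
    obtain ⟨-, hBD, hBc, hBi⟩ := Finset.mem_filter.1 hB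
    -- A non-dummy `b₀` in `B` puts the dummy `d k` in `S k`, so both candidate rooms exist.
    obtain ⟨b₀, hb₀, hb₀d⟩ : ∃ b ∈ B, b ∉ Set.range d := by
      by_contra h
      push Not at h
      apply hBB₀
      apply Finset.eq_of_subset_of_card_le
      · intro b hb
        obtain ⟨l, rfl⟩ := h b hb
        refine Finset.mem_image_of_mem d ?_
        have := Finset.mem_image_of_mem c hb
        rwa [hBi, hcd] at this
      · obtain ⟨-, -, h2, -⟩ := Finset.mem_filter.1 hB₀mem
        omega
    obtain ⟨m, i, j, hmB, hmmin, hij, hmij, hS⟩ := exists_door_data r hr B hBD hBn hBc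
    have hne : ∀ k, (Finset.univ.filter fun y => ∀ l, l ≠ k → r l (m l) < r l y).Nonempty := by
      intro k
      refine ⟨d k, Finset.mem_filter.2 ⟨Finset.mem_univ _, fun l hl => ?_⟩⟩
      exact (hmmin l b₀ hb₀).trans_lt (hmax l k b₀ hl.symm hb₀d)
    rw [hS (fun k => Finset.univ.filter fun y => ∀ l, l ≠ k → r l (m l) < r l y) (by simp),
      card_max _ (hr i) _ (hne i), card_max _ (hr j) _ (hne j)]
  have houter : (Finset.univ.filter fun y => y ∉ B₀ ∧ Dom r (insert y B₀)).card = 1 := by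
    have hBn := hBne B₀ hB₀mem
    obtain ⟨-, hBD, hBc, hBi⟩ := Finset.mem_filter.1 hB₀mem
    obtain ⟨m, i, j, hmB, hmmin, hij, hmij, hS⟩ := exists_door_data r hr B₀ hBD hBn hBc
    -- One of `i`, `j` is `i₀`, whose `S` contains `t`; the `S` of the other one is empty.
    have hml : ∀ l, l ≠ i₀ → m l = d l := fun l hl => hr l (le_antisymm
      (hmmin l _ (Finset.mem_image_of_mem d (Finset.mem_erase.2 ⟨hl, Finset.mem_univ _⟩)))
      (hmin l _))
    have hne : (Finset.univ.filter fun y => ∀ l, l ≠ i₀ → r l (m l) < r l y).Nonempty := by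
      refine ⟨t, Finset.mem_filter.2 ⟨Finset.mem_univ _, fun l hl => ?_⟩⟩
      rw [hml l hl]
      refine lt_of_le_of_ne (hmin l t) fun h => ht ⟨l, hr l h⟩
    have hemp : ∀ k, k ≠ i₀ → m i₀ = m k →
        (Finset.univ.filter fun y => ∀ l, l ≠ k → r l (m l) < r l y) = ∅ := by
      intro k hk hmk
      rw [hml k hk] at hmk
      refine Finset.filter_eq_empty_iff.2 fun y _ hy => ?_
      have h0 := hy i₀ hk.symm
      rw [hmk] at h0
      by_cases hyd : y ∈ Set.range d
      · obtain ⟨p, rfl⟩ := hyd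
        by_cases hp : p = i₀
        · rw [hp] at h0
          exact absurd (hmin i₀ (d k)) (not_le.2 h0)
        by_cases hpk : p = k
        · rw [hpk] at h0
          exact lt_irrefl _ h0
        · have := hy p hpk
          rw [hml p hp] at this
          exact lt_irrefl _ this
      · exact absurd h0 (hmax i₀ k y hk hyd).le.not_gt
    rw [hS (fun k => Finset.univ.filter fun y => ∀ l, l ≠ k → r l (m l) < r l y) (by simp)]
    by_cases hi : i = i₀
    · subst hi
      rw [card_max _ (hr i) _ hne]
      simp [hemp j hij.symm hmij]
    · have hj : j = i₀ := by
        by_contra hj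
        rw [hml i hi, hml j hj] at hmij
        exact hij (hdinj hmij)
      subst hj
      rw [card_max _ (hr j) _ hne]
      simp [hemp i hij hmij.symm]
  rw [← hcount, ← Finset.add_sum_erase _ _ hB₀mem, hdoorcard _ hB₀mem, houter] at hroom
  have hrest : Even (∑ B ∈ Doors.erase B₀,
      (Rooms.bipartiteAbove (fun B A => B ⊆ A) B).card) := by
    refine Finset.even_sum _ fun B hB => ?_
    obtain ⟨h1, h2⟩ := Finset.mem_erase.1 hB
    rw [hdoorcard B h2, hother B h2 h1]
    exact even_two
  obtain ⟨a, ha⟩ := hroom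
  obtain ⟨b, hb⟩ := hrest
  omega

end Scarf

/-! ### Brouwer's theorem on the standard simplex -/

/-- Scarf's lemma on the grid of `z : I → ℕ` with sum `N`: for any labelling `c` there are grid
points `x i`, one for each `i` in a nonempty set `C` of labels, which carry the labels in `C`, are
mutually close, and have small coordinates outside `C`. The set `C` consists of the indices whose
dummy does not belong to the dominating set. -/
theorem grid_labelling {I : Type*} [Fintype I] [Nonempty I] (N : ℕ) (c : (I → ℕ) → I) :
    ∃ (C : Finset I) (m : I → ℕ) (x : I → I → ℕ), C.Nonempty ∧
      (∀ i ∈ C, ∑ k, x i k = N ∧ c (x i) = i ∧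
        ∀ k, m k ≤ x i k ∧ x i k ≤ m k + Fintype.card I) ∧
      ∀ k, k ∉ C → m k = 0 := by
  classical
  let T := {x : I → ℕ // x ∈ Finset.piAntidiag Finset.univ N}
  let _ : Fintype T := Finset.fintypeCoeSort _
  have hT : ∀ x : T, ∑ k, x.1 k = N := fun x => (Finset.mem_piAntidiag.1 x.2).1
  have mkT : ∀ y : I → ℕ, ∑ k, y k = N → y ∈ Finset.piAntidiag Finset.univ N := fun y hy =>
    Finset.mem_piAntidiag.2 ⟨hy, fun i _ => Finset.mem_univ i⟩
  obtain ⟨k₀⟩ := ‹Nonempty I›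
  let val : I → T ⊕ I → ℕ := fun i =>
    Sum.elim (fun x => x.1 i + 1) (fun j => if j = i then 0 else N + 2)
  let e := Fintype.equivFin (T ⊕ I)
  let r : I → T ⊕ I → ℕ ×ₗ Fin (Fintype.card (T ⊕ I)) := fun i v => toLex (val i v, e v)
  have hval : ∀ i v w, r i v ≤ r i w → val i v ≤ val i w := by
    intro i v w h
    exact Prod.Lex.monotone_fst _ _ h
  have hlt : ∀ i v w, val i v < val i w → r i v < r i w := by
    intro i v w h
    by_contra hc
    exact absurd (hval i w v (not_lt.1 hc)) (not_le.2 h)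
  have hle : ∀ (x : T) i, x.1 i ≤ N := fun x i => by
    refine le_trans ?_ (hT x).le
    exact Finset.single_le_sum (f := x.1) (fun _ _ => Nat.zero_le _) (Finset.mem_univ i)
  obtain ⟨A, hA, hAc⟩ := Scarf.scarf r
    (fun i v w h => e.injective (congrArg Prod.snd (toLex_inj.1 h)))
    (Sum.elim (fun x => c x.1) id) Sum.inr (fun i => rfl)
    (by
      intro i v
      by_cases h : v = Sum.inr i
      · rw [h]
      · refine (hlt i _ _ ?_).le
        rcases v with x | j
        · simp [val]
        · have : j ≠ i := fun hj => h (by rw [hj])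
          simp [val, this])
    (by
      intro i j v hij hv
      refine hlt i _ _ ?_
      rcases v with x | l
      · have := hle x i
        simp only [val, Sum.elim_inl, Sum.elim_inr, if_neg hij]
        omega
      · exact absurd ⟨l, rfl⟩ hv)
    (Sum.inl ⟨Pi.single k₀ N, mkT _ (by simp)⟩) (by simp)
  set C : Finset I := Finset.univ.filter fun i => (Sum.inr i : T ⊕ I) ∉ A with hC
  have hdom : ∀ y : I → ℕ, ∑ k, y k = N →
      ∃ k ∈ C, ∀ x : T, Sum.inl x ∈ A → y k ≤ x.1 k := by
    intro y hy
    obtain ⟨k, hk⟩ := hA (Sum.inl ⟨y, mkT y hy⟩)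
    refine ⟨k, ?_, fun x hx => ?_⟩
    · refine Finset.mem_filter.2 ⟨Finset.mem_univ _, fun h => ?_⟩
      have := hval _ _ _ (hk _ h)
      simp [val] at this
    · have := hval _ _ _ (hk _ hx)
      simpa [val] using this
  have hx : ∀ i, ∃ x : I → ℕ, i ∈ C → ∑ k, x k = N ∧ c x = i ∧
      ∃ h : x ∈ Finset.piAntidiag Finset.univ N, (Sum.inl ⟨x, h⟩ : T ⊕ I) ∈ A := by
    intro i
    by_cases hi : i ∈ C
    · obtain ⟨a, ha, hai⟩ := hAc i
      rcases a with x | j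
      · exact ⟨x.1, fun _ => ⟨hT x, hai, x.2, ha⟩⟩
      · have hj : j = i := hai
        subst hj
        exact absurd ha (Finset.mem_filter.1 hi).2
    · exact ⟨0, fun h => absurd h hi⟩
  choose x hx using hx
  have hCne : C.Nonempty := by
    obtain ⟨k, hk, -⟩ := hdom (Pi.single k₀ N) (by simp)
    exact ⟨k, hk⟩
  let m : I → ℕ := fun k => if k ∈ C then C.inf' hCne (fun i => x i k) else 0
  have hm : ∀ i ∈ C, ∀ k, m k ≤ x i k := by
    intro i hi k
    by_cases hk : k ∈ C
    · simp only [m, if_pos hk]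
      exact Finset.inf'_le _ hi
    · simp [m, hk]
  -- Otherwise some grid point exceeds `m` in every coordinate of `C`, against dominance.
  have hsum : N < ∑ k, (m k + 1) := by
    by_contra hcon
    push Not at hcon
    obtain ⟨k, hk, hk'⟩ := hdom
      (fun k => (m k + 1) + (Pi.single k₀ (N - ∑ k, (m k + 1)) : I → ℕ) k) (by
        rw [Finset.sum_add_distrib, Finset.sum_pi_single']
        simp only [Finset.mem_univ, if_true]
        omega)
    have h1 : m k + 1 ≤ m k := by
      conv_rhs => simp only [m, if_pos hk]
      refine Finset.le_inf' hCne _ fun i hi => ?_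
      obtain ⟨-, -, h, hiA⟩ := hx i hi
      exact (Nat.le_add_right _ _).trans (hk' _ hiA)
    omega
  refine ⟨C, m, x, hCne, fun i hi => ⟨(hx i hi).1, (hx i hi).2.1, fun k => ⟨hm i hi k, ?_⟩⟩,
    fun k hk => by simp [m, hk]⟩
  have h1 := (hx i hi).1
  rw [Finset.sum_add_distrib, Finset.sum_const, Finset.card_univ, smul_eq_mul, mul_one,
    ← Finset.add_sum_erase _ _ (Finset.mem_univ k)] at hsum
  rw [← Finset.add_sum_erase _ _ (Finset.mem_univ k)] at h1
  have h2 : ∑ l ∈ Finset.univ.erase k, m l ≤ ∑ l ∈ Finset.univ.erase k, x i l :=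
    Finset.sum_le_sum fun l _ => hm i hi l
  omega

lemma brouwer_approx {I : Type*} [Fintype I] [Nonempty I] (f : (I → ℝ) → I → ℝ)
    (hf : ContinuousOn f (stdSimplex ℝ I)) (hmap : Set.MapsTo f (stdSimplex ℝ I) (stdSimplex ℝ I))
    (ε : ℝ) (hε : 0 < ε) : ∃ p ∈ stdSimplex ℝ I, ∀ k, p k ≤ f p k + ε := by
  have huc := (isCompact_stdSimplex ℝ I).uniformContinuousOn_of_continuous hf
  obtain ⟨δ, hδ, hfδ⟩ := Metric.uniformContinuousOn_iff.1 huc (ε / 2) (by positivity)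
  obtain ⟨N, hN⟩ := exists_nat_gt ((Fintype.card I : ℝ) / min δ (ε / 2))
  have hmin : 0 < min δ (ε / 2) := by positivity
  have hN0 : (0 : ℝ) < N := lt_of_le_of_lt (by positivity) hN
  have hnN : (Fintype.card I : ℝ) / N < min δ (ε / 2) := by
    rw [div_lt_iff₀ hmin] at hN
    rw [div_lt_iff₀ hN0]
    linarith
  let P : (I → ℕ) → I → ℝ := fun z k => (z k : ℝ) / N
  have hP : ∀ z : I → ℕ, ∑ k, z k = N → P z ∈ stdSimplex ℝ I := by
    intro z hz
    refine ⟨fun k => by positivity, ?_⟩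
    simp only [P]
    rw [← Finset.sum_div, ← Nat.cast_sum, hz, div_self hN0.ne']
  have hc : ∀ z : I → ℕ, ∃ i, ∑ k, z k = N → P z i ≤ f (P z) i := by
    intro z
    by_cases hz : ∑ k, z k = N
    · by_contra hcon
      push Not at hcon
      have := Finset.sum_lt_sum_of_nonempty Finset.univ_nonempty
        (fun i _ => (hcon i).2)
      rw [(hP z hz).2, (hmap (hP z hz)).2] at this
      exact lt_irrefl _ this
    · exact ⟨Classical.arbitrary I, fun h => absurd h hz⟩
  choose c hc using hc
  obtain ⟨C, m, x, ⟨i₀, hi₀⟩, hx, hm⟩ := grid_labelling N c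
  have hp := hP (x i₀) (hx i₀ hi₀).1
  refine ⟨P (x i₀), hp, fun k => ?_⟩
  by_cases hk : k ∈ C
  · have hq := hP (x k) (hx k hk).1
    have hd : ∀ l, |P (x k) l - P (x i₀) l| ≤ (Fintype.card I : ℝ) / N := by
      intro l
      have h1 := (hx k hk).2.2 l
      have h2 := (hx i₀ hi₀).2.2 l
      simp only [P]
      rw [← sub_div, abs_div, abs_of_pos hN0]
      gcongr
      have a1 : (m l : ℝ) ≤ x k l := by exact_mod_cast h1.1
      have a2 : (x k l : ℝ) ≤ m l + Fintype.card I := by exact_mod_cast h1.2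
      have a3 : (m l : ℝ) ≤ x i₀ l := by exact_mod_cast h2.1
      have a4 : (x i₀ l : ℝ) ≤ m l + Fintype.card I := by exact_mod_cast h2.2
      rw [abs_le]
      constructor <;> linarith
    have hdist : dist (P (x k)) (P (x i₀)) < δ := by
      refine lt_of_le_of_lt ((dist_pi_le_iff (by positivity)).2 fun l => ?_)
        (hnN.trans_le (min_le_left _ _))
      rw [Real.dist_eq]
      exact hd l
    have h3 := (dist_le_pi_dist _ _ k).trans_lt (hfδ _ hq _ hp hdist)
    rw [Real.dist_eq, abs_lt] at h3
    have h4 := hc (x k) (hx k hk).1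
    rw [(hx k hk).2.1] at h4
    have h5 := (abs_le.1 (hd k)).1
    have h6 := hnN.trans_le (min_le_right _ _)
    linarith
  · have h1 := ((hx i₀ hi₀).2.2 k).2
    rw [hm k hk, zero_add] at h1
    have h2 : P (x i₀) k ≤ (Fintype.card I : ℝ) / N := by
      simp only [P]
      gcongr
    have h6 := hnN.trans_le (min_le_right _ _)
    have := (hmap hp).1 k
    linarith

theorem brouwer_stdSimplex {I : Type*} [Fintype I] [Nonempty I] (f : (I → ℝ) → I → ℝ)
    (hf : ContinuousOn f (stdSimplex ℝ I))
    (hmap : Set.MapsTo f (stdSimplex ℝ I) (stdSimplex ℝ I)) :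
    ∃ p ∈ stdSimplex ℝ I, f p = p := by
  have hne : (stdSimplex ℝ I).Nonempty := by
    obtain ⟨p, hp, -⟩ := brouwer_approx f hf hmap 1 one_pos
    exact ⟨p, hp⟩
  -- `φ p = 0` says that `p k ≤ f p k` for all `k`.
  let φ : (I → ℝ) → ℝ := fun p => ∑ k, max (p k - f p k) 0
  have hφ : ContinuousOn φ (stdSimplex ℝ I) := by
    refine continuousOn_finsetSum _ fun k _ => ?_
    have h1 : ContinuousOn (fun p => f p k) (stdSimplex ℝ I) :=
      (continuous_apply k).comp_continuousOn hf
    exact (((continuous_apply k).continuousOn).sub h1).sup continuousOn_const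
  obtain ⟨p, hp, hpmin⟩ := (isCompact_stdSimplex ℝ I).exists_isMinOn hne hφ
  have hcard : (0 : ℝ) < Fintype.card I := by exact_mod_cast Fintype.card_pos
  have hφ0 : φ p ≤ 0 := by
    refine le_of_forall_pos_le_add fun ε hε => ?_
    obtain ⟨q, hq, hqε⟩ := brouwer_approx f hf hmap (ε / Fintype.card I) (by positivity)
    refine (hpmin hq).trans ?_
    have : φ q ≤ ∑ _k : I, ε / Fintype.card I :=
      Finset.sum_le_sum fun k _ => max_le (by linarith [hqε k]) (by positivity)
    refine this.trans_eq ?_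
    rw [Finset.sum_const, Finset.card_univ, nsmul_eq_mul]
    field_simp
    simp
  have hle : ∀ k, p k ≤ f p k := by
    intro k
    have h1 : max (p k - f p k) 0 ≤ φ p :=
      Finset.single_le_sum (f := fun k => max (p k - f p k) 0)
        (fun _ _ => le_max_right _ _) (Finset.mem_univ k)
    linarith [le_max_left (p k - f p k) 0]
  have heq := (Finset.sum_eq_sum_iff_of_le (s := Finset.univ) (fun k _ => hle k)).1
    (by rw [hp.2, (hmap hp).2])
  exact ⟨p, hp, funext fun k => (heq k (Finset.mem_univ k)).symm⟩

/-! ### Schauder's theorem -/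

lemma schauder_approx {X : Type*} [NormedAddCommGroup X] [NormedSpace ℝ X]
    (M : Set X) (hne : M.Nonempty) (hconv : Convex ℝ M)
    (T : X → X) (hT : ContinuousOn T M) (K : Set X) (hK : IsCompact K) (hKM : K ⊆ M)
    (hTK : Set.MapsTo T M K) (ε : ℝ) (hε : 0 < ε) : ∃ x ∈ M, dist x (T x) ≤ ε := by
  obtain ⟨t, htK, htf, hcov⟩ := hK.finite_cover_balls hε
  have : Fintype t := htf.fintype
  have hnear : ∀ y ∈ K, ∃ i : t, dist y i < ε := by
    intro y hy
    obtain ⟨i, hi, hyi⟩ := Set.mem_iUnion₂.1 (hcov hy)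
    exact ⟨⟨i, hi⟩, hyi⟩
  have : Nonempty t := by
    obtain ⟨x, hx⟩ := hne
    obtain ⟨i, -⟩ := hnear _ (hTK hx)
    exact ⟨i⟩
  let s : (t → ℝ) → X := fun l => ∑ i, l i • (i : X)
  have hs : Continuous s := by fun_prop
  have hsM : Set.MapsTo s (stdSimplex ℝ t) M := fun l hl =>
    hconv.sum_mem (fun i _ => hl.1 i) hl.2 (fun i _ => hKM (htK i.2))
  -- The Schauder projection of `y ∈ K` has barycentric coordinates proportional to `w i y`.
  let w : t → X → ℝ := fun i y => max (ε - dist y i) 0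
  have hw : ∀ i, Continuous (w i) := fun i => by fun_prop
  have hw0 : ∀ i y, 0 ≤ w i y := fun i y => le_max_right _ _
  have hW : ∀ y ∈ K, 0 < ∑ i, w i y := by
    intro y hy
    obtain ⟨i, hi⟩ := hnear y hy
    exact Finset.sum_pos' (fun i _ => hw0 i y)
      ⟨i, Finset.mem_univ _, lt_max_of_lt_left (by linarith)⟩
  have hTs : ContinuousOn (fun l => T (s l)) (stdSimplex ℝ t) := hT.comp hs.continuousOn hsM
  obtain ⟨l, hl, hfix⟩ := brouwer_stdSimplex
    (fun l i => w i (T (s l)) / ∑ j, w j (T (s l)))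
    (continuousOn_pi.2 fun i => ((hw i).comp_continuousOn hTs).div
      ((continuous_finsetSum _ fun j _ => hw j).comp_continuousOn hTs)
      fun l hl => (hW _ (hTK (hsM hl))).ne')
    (fun l hl => ⟨fun i => div_nonneg (hw0 _ _) (Finset.sum_nonneg fun j _ => hw0 _ _), by
      rw [← Finset.sum_div, div_self (hW _ (hTK (hsM hl))).ne']⟩)
  refine ⟨s l, hsM hl, ?_⟩
  have hterm : ∀ i, l i * dist (i : X) (T (s l)) ≤ l i * ε := by
    intro i
    by_cases h : dist (i : X) (T (s l)) ≤ ε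
    · exact mul_le_mul_of_nonneg_left h (hl.1 i)
    · have h0 : l i = 0 := by
        rw [← congrFun hfix i]
        have : w i (T (s l)) = 0 := max_eq_right (by rw [dist_comm]; linarith)
        simp [this]
      simp [h0]
  have hdiff : s l - T (s l) = ∑ i, l i • ((i : X) - T (s l)) := by
    simp only [smul_sub, Finset.sum_sub_distrib]
    rw [← Finset.sum_smul, hl.2, one_smul]
  rw [dist_eq_norm, hdiff]
  calc ‖∑ i, l i • ((i : X) - T (s l))‖ ≤ ∑ i, ‖l i • ((i : X) - T (s l))‖ := norm_sum_le _ _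
    _ ≤ ∑ i, l i * ε := Finset.sum_le_sum fun i _ => by
        rw [norm_smul, Real.norm_of_nonneg (hl.1 i), ← dist_eq_norm]
        exact hterm i
    _ = ε := by rw [← Finset.sum_mul, hl.2, one_mul]

theorem schauder {X : Type*} [NormedAddCommGroup X] [NormedSpace ℝ X]
    (M : Set X) (hne : M.Nonempty) (hcl : IsClosed M) (hconv : Convex ℝ M)
    (T : X → X) (hT : ContinuousOn T M) (hTM : Set.MapsTo T M M)
    (K : Set X) (hK : IsCompact K) (hTK : Set.MapsTo T M K) : ∃ x ∈ M, T x = x := by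
  have hKM : IsCompact (K ∩ M) := hK.inter_right hcl
  have h := fun n : ℕ => schauder_approx M hne hconv T hT (K ∩ M) hKM Set.inter_subset_right
    (fun x hx => ⟨hTK hx, hTM hx⟩) (1 / ((n : ℝ) + 1)) (by positivity)
  choose x hxM hx using h
  obtain ⟨z, hz, ψ, hψ, hlim⟩ := hKM.tendsto_subseq
    (x := fun n => T (x n)) (fun n => ⟨hTK (hxM n), hTM (hxM n)⟩)
  have hd : Tendsto (fun n => dist (x (ψ n)) (T (x (ψ n)))) atTop (nhds 0) :=
    squeeze_zero (fun _ => dist_nonneg) (fun n => hx (ψ n))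
      (tendsto_one_div_add_atTop_nhds_zero_nat.comp hψ.tendsto_atTop)
  have hxz : Tendsto (fun n => x (ψ n)) atTop (nhds z) :=
    (tendsto_iff_of_dist hd).2 hlim
  have hTz : Tendsto (fun n => T (x (ψ n))) atTop (nhds (T z)) :=
    (hT z hz.2).tendsto.comp (tendsto_nhdsWithin_iff.2 ⟨hxz, Eventually.of_forall fun n => hxM _⟩)
  exact ⟨z, hz.2, tendsto_nhds_unique hTz hlim⟩

/-! ### The Krasnosel'skii-type theorem -/

lemma isUnit_one_sub_of_root_tendsto {R : Type*} [NormedRing R] [HasSummableGeomSeries R]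
    (a : R) (ρ : ℝ)
    (hρ : Tendsto (fun k : ℕ => ‖a ^ k‖ ^ ((1 : ℝ) / k)) atTop (nhds ρ)) (hρ1 : ρ < 1) :
    IsUnit (1 - a) := by
  obtain ⟨k, hk, hk0⟩ := ((hρ.eventually (gt_mem_nhds hρ1)).and (eventually_gt_atTop 0)).exists
  have hlt : ‖a ^ k‖ < 1 := by
    by_contra h
    exact absurd (Real.one_le_rpow (not_lt.1 h) (by positivity)) (not_le.2 hk)
  have hu := isUnit_one_sub_of_norm_lt_one hlt
  rw [← mul_neg_geom_sum] at hu
  have hcomm : Commute (1 - a) (∑ i ∈ Finset.range k, a ^ i) := by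
    rw [commute_iff_eq, mul_neg_geom_sum, geom_sum_mul_neg]
  exact (hcomm.isUnit_mul_iff.1 hu).1

/-- Krasnosel'skii-type fixed point theorem for the sum of a bounded
linear operator with spectral radius `< 1` and a compact mapping. -/
theorem stmt_4 {X : Type*} [NormedAddCommGroup X] [NormedSpace ℝ X] [CompleteSpace X]
    (M : Set X) (hne : M.Nonempty) (hcl : IsClosed M) (hconv : Convex ℝ M)
    (F₁ : X →L[ℝ] X) (ρ : ℝ)
    (hρ : Tendsto (fun k : ℕ => ‖F₁ ^ k‖ ^ ((1 : ℝ) / k)) atTop (nhds ρ))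
    (hρ1 : ρ < 1)
    (F₂ : X → X) (hF₂c : ContinuousOn F₂ M)
    (K : Set X) (hK : IsCompact K) (hKsub : F₂ '' M ⊆ K)
    (hinv : ∀ x y : X, y ∈ M → x = F₁ x + F₂ y → x ∈ M) :
    ∃ x ∈ M, F₁ x + F₂ x = x := by
  obtain ⟨u, hu⟩ := isUnit_one_sub_of_root_tendsto F₁ ρ hρ hρ1
  set G : X →L[ℝ] X := ↑u⁻¹
  have hG : ∀ y, G y = F₁ (G y) + y := by
    intro y
    have h1 : (1 - F₁) * G = 1 := by rw [← hu]; exact u.mul_inv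
    have h2 : G y - F₁ (G y) = y := by simpa using DFunLike.congr_fun h1 y
    rw [← sub_eq_iff_eq_add']
    exact h2
  obtain ⟨x, hx, hfix⟩ := schauder M hne hcl hconv (fun y => G (F₂ y))
    (G.continuous.comp_continuousOn hF₂c)
    (fun y hy => hinv _ y hy (hG _)) (G '' K) (hK.image G.continuous)
    (fun y hy => ⟨_, hKsub ⟨y, hy, rfl⟩, rfl⟩)
  refine ⟨x, hx, ?_⟩
  have := hG (F₂ x)
  rw [show G (F₂ x) = x from hfix] at this
  exact this.symm
end

section
/- Let X be a Banach space, F₁: X → X a bounded linear operator with spectral radius r(F₁) < 1, r > 0, M = B_X(0, r), and F₂: M → X continuous with F₂(M) contained in a compact subset of the closed ball of radius r/‖(I - F₁)^{-1}‖. Then every x ∈ X satisfying x = F₁(x) + F₂(y) for some y ∈ M lies in M; consequently F₁ + F₂ has a fixed point in M. -/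
/-!
Since `G` inverts `1 - F₁`, the equation `x = F₁ x + F₂ y` says `x = G (F₂ y)`, and
`‖G (F₂ y)‖ ≤ ‖G‖ * (r / ‖G‖) ≤ r`. Fixed points of `F₁ + F₂` are the fixed points of `G ∘ F₂`,
a continuous map of the ball into the compact set `G '' K`, itself contained in the ball. So the
second claim is Schauder's fixed point theorem, which is proved here from scratch.

*Brouwer.* The key fact (`integral_det_neg_eq`) is that `∫_B det (-Dp)` depends only on the values
of the Lipschitz map `p` off the bounded open set `B`, where `p` is differentiable on `B`. For `c`
larger than the Lipschitz constant, `c • id - p` is a bijection of `E`, so the image of `B` is the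
complement of the image of `Bᶜ`; its volume `∫_B det (c - Dp)` is therefore determined by `p` on
`Bᶜ`. As `det (c - A)` is a polynomial in `c` of degree `dim E`, Lagrange interpolation expresses
its value at `c = 0` through finitely many such large `c`. If a `C¹` map `g` vanishing outside the
ball of radius `R` had no fixed point, then `x ↦ R (x - g x) / ‖x - g x‖` would be the identity on
the sphere of radius `R` and take all its values there. Its derivative is nowhere invertible, so
comparing its extension by the identity with the identity itself forces the ball to have volume
zero. Cutting off and smoothing gives a fixed point for every bounded continuous `E → E`
(`exists_fixedPoint_of_bounded`).

*Schauder.* For a continuous `T` with values in a compact set `K`, a partition of unity subordinate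
to a finite `ε`-net of `K` moves points of `K` by less than `ε` and factors through a
finite-dimensional space, so Brouwer gives `x` with `dist x (T x) < ε`; compactness of `K` lets
`ε → 0`. A map defined on a ball only is first precomposed with the radial retraction.
-/

open Filter Metric
open MeasureTheory

/-! ### Volume and Lipschitz maps that agree off a bounded open set -/

section Volume

/-- Solving `c • x - p x = y` amounts to finding a fixed point of the contraction
`x ↦ c⁻¹ • (y + p x)`. -/
lemma bijective_smul_sub {E : Type*} [NormedAddCommGroup E] [NormedSpace ℝ E]
    [CompleteSpace E] {p : E → E} {K : NNReal} (hp : LipschitzWith K p) {c : ℝ} (hc : K < c) :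
    Function.Bijective fun x => c • x - p x := by
  have hc0 : 0 < c := K.coe_nonneg.trans_lt hc
  constructor
  · intro x y hxy
    have h1 : c • (x - y) = p x - p y := by
      have h : c • x - p x = c • y - p y := hxy
      rw [smul_sub, sub_eq_sub_iff_sub_eq_sub]; exact h
    have h2 := hp.norm_sub_le x y
    rw [← h1, norm_smul, Real.norm_of_nonneg hc0.le] at h2
    by_contra hne
    have : 0 < ‖x - y‖ := norm_pos_iff.2 (sub_ne_zero.2 hne)
    nlinarith
  · intro y
    have hK : ContractingWith (K / c.toNNReal) fun x => c⁻¹ • (y + p x) := by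
      have hcc : (c.toNNReal : ℝ) = c := Real.coe_toNNReal _ hc0.le
      constructor
      · rw [← NNReal.coe_lt_coe, NNReal.coe_div, hcc, NNReal.coe_one, div_lt_one hc0]
        exact hc
      · refine LipschitzWith.of_dist_le_mul fun a b => ?_
        have := hp.dist_le_mul a b
        rw [dist_smul₀, dist_add_left, NNReal.coe_div, hcc, norm_inv,
          Real.norm_of_nonneg hc0.le, div_eq_inv_mul, mul_assoc]
        gcongr
    obtain ⟨x, hx, -⟩ := hK.exists_fixedPoint 0 (edist_ne_top _ _)
    rw [Function.IsFixedPt, inv_smul_eq_iff₀ hc0.ne'] at hx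
    exact ⟨x, sub_eq_iff_eq_add.2 hx.symm⟩

variable {E : Type*} [NormedAddCommGroup E] [NormedSpace ℝ E] [FiniteDimensional ℝ E]

/-- The determinant of `c - s A` does not vanish for `s ∈ [0, 1]` and is positive at `s = 0`. -/
lemma det_smul_one_sub_pos {A : E →L[ℝ] E} {c : ℝ} (h : ‖A‖ < c) :
    0 < (c • (1 : E →L[ℝ] E) - A).det := by
  have hc : 0 < c := (norm_nonneg A).trans_lt h
  have hne : ∀ s ∈ Set.Icc (0 : ℝ) 1, (c • (1 : E →L[ℝ] E) - s • A).det ≠ 0 := by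
    intro s hs h0
    obtain ⟨v, hv, hv0⟩ := (Submodule.ne_bot_iff _).1
      (bot_lt_iff_ne_bot.1 (LinearMap.bot_lt_ker_of_det_eq_zero h0))
    have h1 : c • v = s • A v := by
      have : c • v - s • A v = 0 := by simpa using hv
      exact sub_eq_zero.1 this
    have h2 : c * ‖v‖ = s * ‖A v‖ := by
      have := congrArg norm h1
      rwa [norm_smul, norm_smul, Real.norm_of_nonneg hc.le, Real.norm_of_nonneg hs.1] at this
    have h3 : s * ‖A v‖ ≤ ‖A‖ * ‖v‖ :=
      (mul_le_of_le_one_left (norm_nonneg _) hs.2).trans (A.le_opNorm v)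
    have h4 : 0 < ‖v‖ := norm_pos_iff.2 hv0
    nlinarith
  by_contra hneg
  have hcont : ContinuousOn (fun s : ℝ => (c • (1 : E →L[ℝ] E) - s • A).det) (Set.Icc 0 1) :=
    (ContinuousLinearMap.continuous_det.comp (by fun_prop)).continuousOn
  have h0 : 0 ≤ (c • (1 : E →L[ℝ] E) - (0 : ℝ) • A).det := by
    have : (c • (1 : E →L[ℝ] E) - (0 : ℝ) • A).det = c ^ Module.finrank ℝ E := by
      simp [ContinuousLinearMap.det]
    rw [this]; positivity
  obtain ⟨s, hs, hs0⟩ := intermediate_value_Icc' zero_le_one hcont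
    ⟨by simpa using not_lt.1 hneg, h0⟩
  exact hne s hs hs0

/-- Lagrange interpolation of the characteristic polynomial at `dim E + 1` nodes above `K`: the
nodes `c i` and weights `w i` do not depend on `A`. -/
lemma exists_det_neg_eq_sum (E : Type*) [NormedAddCommGroup E] [NormedSpace ℝ E]
    [FiniteDimensional ℝ E] (K : ℝ) :
    ∃ (s : Finset ℕ) (c w : ℕ → ℝ), (∀ i, K < c i) ∧
      ∀ A : E →L[ℝ] E, (-A).det = ∑ i ∈ s, w i * (c i • (1 : E →L[ℝ] E) - A).det := by
  classical
  set s := Finset.range (Module.finrank ℝ E + 1)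
  set c : ℕ → ℝ := fun i => K + 1 + i
  refine ⟨s, c, fun i => (Lagrange.basis s c i).eval 0, fun i => ?_, fun A => ?_⟩
  · have : (0 : ℝ) ≤ i := i.cast_nonneg
    simp only [c]; linarith
  · have hinj : Set.InjOn c s := fun i _ j _ h => by simpa [c] using h
    have hev : ∀ t : ℝ, (A : E →ₗ[ℝ] E).charpoly.eval t = (t • (1 : E →L[ℝ] E) - A).det := by
      intro t
      rw [LinearMap.eval_charpoly, ContinuousLinearMap.det]
      congr 1
    have hdeg : (A : E →ₗ[ℝ] E).charpoly.degree < s.card := by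
      rw [Polynomial.degree_eq_natDegree (LinearMap.charpoly_monic _).ne_zero,
        LinearMap.charpoly_natDegree]
      simp only [s, Finset.card_range]
      exact_mod_cast Nat.lt_succ_self _
    have := congrArg (Polynomial.eval 0) (Lagrange.eq_interpolate hinj hdeg)
    rw [hev, Lagrange.interpolate_apply, Polynomial.eval_finsetSum] at this
    simp only [zero_smul, zero_sub, Polynomial.eval_mul, Polynomial.eval_C, hev] at this
    rw [this]
    exact Finset.sum_congr rfl fun i _ => mul_comm _ _

variable [MeasurableSpace E] [BorelSpace E]

/-- Change of variables for the injective map `c • id - p`, whose Jacobian determinant is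
positive on `B`. -/
lemma integral_det_smul_one_sub (μ : Measure E) [μ.IsAddHaarMeasure] {p : E → E}
    {p' : E → E →L[ℝ] E} {K : NNReal} (hp : LipschitzWith K p) {B : Set E} (hB : IsOpen B)
    (hBb : Bornology.IsBounded B) (hp' : ∀ x ∈ B, HasFDerivAt p (p' x) x) {c : ℝ} (hc : K < c) :
    IntegrableOn (fun x => (c • (1 : E →L[ℝ] E) - p' x).det) B μ ∧
    ∫ x in B, (c • (1 : E →L[ℝ] E) - p' x).det ∂μ = μ.real ((fun x => c • x - p x) '' B) := by
  set f : E → E := fun x => c • x - p x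
  have hf' : ∀ x ∈ B, HasFDerivWithinAt f (c • (1 : E →L[ℝ] E) - p' x) B x := fun x hx =>
    (((hasFDerivAt_id x).const_smul c).sub (hp' x hx)).hasFDerivWithinAt
  have hinj : Set.InjOn f B := (bijective_smul_sub hp hc).1.injOn
  have habs : Set.EqOn (fun x => |(c • (1 : E →L[ℝ] E) - p' x).det| • (1 : ℝ))
      (fun x => (c • (1 : E →L[ℝ] E) - p' x).det) B := fun x hx => by
    have := det_smul_one_sub_pos (((hp' x hx).le_of_lipschitz hp).trans_lt hc)
    simp [abs_of_pos this]
  have hfin : μ (f '' B) ≠ ⊤ := by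
    have hfl : LipschitzWith (‖c‖₊ + K) f := (lipschitzWith_smul c).sub hp
    exact ((hfl.isBounded_image hBb).measure_lt_top).ne
  constructor
  · refine IntegrableOn.congr_fun ?_ habs hB.measurableSet
    exact (integrableOn_image_iff_integrableOn_abs_det_fderiv_smul μ hB.measurableSet hf' hinj
      fun _ => (1 : ℝ)).1 (integrableOn_const hfin)
  · rw [← setIntegral_congr_fun hB.measurableSet habs,
      ← integral_image_eq_integral_abs_det_fderiv_smul μ hB.measurableSet hf' hinj fun _ => (1 : ℝ)]
    simp

/-- The integral of the Jacobian determinant of `-p` over `B` depends only on `p` off `B`. -/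
lemma integral_det_neg_eq (μ : Measure E) [μ.IsAddHaarMeasure] {p q : E → E}
    {p' q' : E → E →L[ℝ] E} {K : NNReal} (hp : LipschitzWith K p) (hq : LipschitzWith K q)
    {B : Set E} (hB : IsOpen B) (hBb : Bornology.IsBounded B)
    (hp' : ∀ x ∈ B, HasFDerivAt p (p' x) x) (hq' : ∀ x ∈ B, HasFDerivAt q (q' x) x)
    (hpq : ∀ x ∉ B, p x = q x) :
    ∫ x in B, (-p' x).det ∂μ = ∫ x in B, (-q' x).det ∂μ := by
  obtain ⟨s, c, w, hc, hw⟩ := exists_det_neg_eq_sum E K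
  simp only [hw]
  rw [integral_finsetSum, integral_finsetSum]
  · refine Finset.sum_congr rfl fun i _ => ?_
    rw [integral_const_mul, integral_const_mul,
      (integral_det_smul_one_sub μ hp hB hBb hp' (hc i)).2,
      (integral_det_smul_one_sub μ hq hB hBb hq' (hc i)).2]
    congr 2
    -- By bijectivity the image of `B` is the complement of the image of `Bᶜ`, where `p = q`.
    rw [← compl_inj_iff, ← Set.image_compl_eq (bijective_smul_sub hp (hc i)),
      ← Set.image_compl_eq (bijective_smul_sub hq (hc i))]
    exact Set.image_congr fun x hx => by rw [hpq x hx]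
  · exact fun i _ => (integral_det_smul_one_sub μ hq hB hBb hq' (hc i)).1.const_mul _
  · exact fun i _ => (integral_det_smul_one_sub μ hp hB hBb hp' (hc i)).1.const_mul _

end Volume

/-! ### Brouwer's theorem for bounded maps of Euclidean spaces -/

section Brouwer

/-- A segment leaving the ball crosses the sphere, where `m` already vanishes, so extension by
zero keeps the Lipschitz constant. -/
lemma lipschitzWith_of_closedBall {E F : Type*} [NormedAddCommGroup E] [NormedSpace ℝ E]
    [NormedAddCommGroup F] {m : E → F} {R : ℝ} {L : NNReal}
    (h : LipschitzOnWith L m (closedBall 0 R)) (h0 : ∀ x, R ≤ ‖x‖ → m x = 0) :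
    LipschitzWith L m := by
  have key : ∀ x y, ‖x‖ ≤ R → R ≤ ‖y‖ → dist (m x) (m y) ≤ L * dist x y := by
    intro x y hx hy
    have hcont : ContinuousOn (fun s : ℝ => ‖AffineMap.lineMap x y s‖) (Set.Icc 0 1) := by
      have : Continuous (fun s : ℝ => (AffineMap.lineMap x y s : E)) :=
        AffineMap.lineMap_continuous
      fun_prop
    obtain ⟨s, hs, hsR⟩ := intermediate_value_Icc zero_le_one hcont
      (show R ∈ Set.Icc _ _ by simpa using ⟨hx, hy⟩)
    simp only at hsR
    rw [h0 y hy, ← h0 _ hsR.ge]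
    refine (h.dist_le_mul x (by simpa using hx) _ (by simpa using hsR.le)).trans ?_
    rw [dist_left_lineMap, Real.norm_of_nonneg hs.1]
    gcongr
    exact mul_le_of_le_one_left dist_nonneg hs.2
  refine LipschitzWith.of_dist_le_mul fun x y => ?_
  rcases le_total ‖x‖ R with hx | hx <;> rcases le_total ‖y‖ R with hy | hy
  · exact h.dist_le_mul x (by simpa using hx) y (by simpa using hy)
  · exact key x y hx hy
  · rw [dist_comm, dist_comm x]; exact key y x hy hx
  · rw [h0 x hx, h0 y hy, dist_self]; positivity

variable {E : Type*} [NormedAddCommGroup E] [InnerProductSpace ℝ E] [FiniteDimensional ℝ E]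

/-- Differentiating `‖N‖ ^ 2 = R ^ 2` shows that the derivative takes values in the hyperplane
orthogonal to `N x ≠ 0`. -/
lemma det_neg_eq_zero_of_norm_const {N : E → E} {N' : E →L[ℝ] E} {R : ℝ} (hR : 0 < R)
    (hN : ∀ x, ‖N x‖ = R) {x : E} (h : HasFDerivAt N N' x) : (-N').det = 0 := by
  have horth : ∀ v, inner ℝ (N x) (N' v) = 0 := by
    intro v
    have h1 := h.norm_sq
    simp only [hN] at h1
    have h2 := congrArg (fun T : E →L[ℝ] ℝ => T v) (h1.unique (hasFDerivAt_const (R ^ 2) x))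
    simpa using h2
  by_contra hne
  have hker : LinearMap.ker ((-N' : E →L[ℝ] E) : E →ₗ[ℝ] E) = ⊥ := by
    by_contra hk
    exact hne (LinearMap.det_eq_zero_iff_ker_ne_bot.2 hk)
  obtain ⟨v, hv⟩ := LinearMap.injective_iff_surjective.1 (LinearMap.ker_eq_bot.1 hker) (N x)
  have hv' : N' (-v) = N x := by simpa using hv
  have h3 := horth (-v)
  rw [hv', real_inner_self_eq_norm_sq, hN] at h3
  exact hR.ne' (by simpa using h3)

/-- Brouwer's theorem for `C¹` maps vanishing outside a ball. -/
lemma exists_fixedPoint_of_contDiff {g : E → E} (hg : ContDiff ℝ 1 g) {R : ℝ} (hR : 0 < R)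
    (hg0 : ∀ x, R ≤ ‖x‖ → g x = 0) : ∃ x, g x = x := by
  by_contra! hne
  borelize E
  have hh : ∀ x, x - g x ≠ 0 := fun x hx => hne x (sub_eq_zero.1 hx).symm
  have hhn : ∀ x, ‖x - g x‖ ≠ 0 := fun x => norm_ne_zero_iff.2 (hh x)
  have hhc : ContDiff ℝ 1 fun x => x - g x := contDiff_id.sub hg
  -- `N` has values in the sphere of radius `R`, and fixes that sphere because `g` vanishes there.
  set N : E → E := fun x => R • ‖x - g x‖⁻¹ • (x - g x) with hN
  have hNc : ContDiff ℝ 1 N := (((hhc.norm ℝ hh).inv hhn).smul hhc).const_smul R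
  have hNn : ∀ x, ‖N x‖ = R := fun x => by
    rw [hN, norm_smul, norm_smul, norm_inv, norm_norm, inv_mul_cancel₀ (hhn x), mul_one,
      Real.norm_of_nonneg hR.le]
  have hNs : ∀ x, ‖x‖ = R → N x = x := fun x hx => by
    simp only [hN, hg0 x hx.ge, sub_zero, hx, smul_inv_smul₀ hR.ne']
  set p : E → E := fun x => if ‖x‖ < R then N x else x with hp
  obtain ⟨L, hL⟩ := (hNc.sub contDiff_id).contDiffOn.exists_lipschitzOnWith one_ne_zero
    (convex_closedBall (0 : E) R) (isCompact_closedBall 0 R)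
  have hpN : ∀ x ∈ closedBall (0 : E) R, p x - x = N x - id x := fun x hx => by
    rcases (mem_closedBall_zero_iff.1 hx).lt_or_eq with h | h
    · simp [hp, h]
    · simp [hp, h, hNs x h]
  have hm : LipschitzWith L fun x => p x - x := by
    refine lipschitzWith_of_closedBall (R := R) (fun x hx y hy => ?_) fun x hx => ?_
    · simpa only [hpN x hx, hpN y hy] using hL hx hy
    · simp [hp, hx.not_gt]
  have hpL : LipschitzWith (L + 1) p := by simpa using hm.add LipschitzWith.id
  have hqL : LipschitzWith (L + 1) (id : E → E) := LipschitzWith.id.weaken (by simp)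
  have key := integral_det_neg_eq volume hpL hqL (isOpen_ball (x := (0 : E)) (ε := R))
    isBounded_ball (p' := fun x => fderiv ℝ N x) (q' := fun _ => 1)
    (fun x hx => ?_) (fun x _ => hasFDerivAt_id x) (fun x hx => ?_)
  · have h0 : ∀ x, (-fderiv ℝ N x).det = 0 := fun x =>
      det_neg_eq_zero_of_norm_const hR hNn (hNc.differentiable one_ne_zero x).hasFDerivAt
    have h1 : (-1 : E →L[ℝ] E).det ≠ 0 := by
      have : (-1 : E →L[ℝ] E).det = (-1) ^ Module.finrank ℝ E := by
        have := LinearMap.det_smul (-1 : ℝ) (LinearMap.id : E →ₗ[ℝ] E)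
        rw [LinearMap.det_id, mul_one] at this
        rw [← this, ContinuousLinearMap.det]
        congr 1
        ext; simp
      rw [this]; exact pow_ne_zero _ (by norm_num)
    simp only [h0, integral_zero, setIntegral_const, smul_eq_mul] at key
    have h2 : 0 < (volume : Measure E).real (ball 0 R) :=
      ENNReal.toReal_pos (measure_ball_pos _ _ hR).ne' measure_ball_lt_top.ne
    exact mul_ne_zero h2.ne' h1 key.symm
  · refine (hNc.differentiable one_ne_zero x).hasFDerivAt.congr_of_eventuallyEq ?_
    filter_upwards [isOpen_ball.mem_nhds hx] with y hy
    simp [hp, mem_ball_zero_iff.1 hy]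
  · simp only [hp, id]
    rw [if_neg (by simpa using hx)]

/-- Brouwer's theorem for bounded continuous maps defined on the whole space. -/
lemma exists_fixedPoint_of_bounded {f : E → E} (hf : Continuous f) {R : ℝ}
    (hfR : ∀ x, ‖f x‖ ≤ R) : ∃ x, f x = x := by
  by_contra! hne
  have hR1 : 0 < R + 1 := by linarith [(norm_nonneg _).trans (hfR 0)]
  let χ : ContDiffBump (0 : E) := ⟨R + 1, R + 2, hR1, by linarith⟩
  -- The cut-off map has no fixed point either: its fixed points have norm at most `R`, where `χ = 1`.
  have hFc : Continuous fun x => χ x • f x := χ.continuous.smul hf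
  have hF : ∀ x, χ x • f x ≠ x := by
    intro x hx
    have h1 : ‖x‖ ≤ R := by
      rw [← hx, norm_smul, Real.norm_of_nonneg χ.nonneg]
      exact (mul_le_of_le_one_left (norm_nonneg _) χ.le_one).trans (hfR x)
    rw [χ.one_of_mem_closedBall (mem_closedBall_zero_iff.2 (by simp only [χ]; linarith)),
      one_smul] at hx
    exact hne x hx
  -- A smooth approximation within the error `dist (χ x • f x) x > 0` cannot have a fixed point.
  obtain ⟨g, hg, hgF, hsupp⟩ := hFc.exists_contDiff_approx 1 (hFc.dist continuous_id)
    fun x => dist_pos.2 (hF x)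
  obtain ⟨x, hx⟩ := exists_fixedPoint_of_contDiff hg (R := R + 2) (by linarith) fun x hx => by
    by_contra h
    refine hsupp h ?_
    simp only
    rw [χ.zero_of_le_dist (by simpa [χ] using hx), zero_smul]
  have := hgF x
  rw [hx, dist_comm] at this
  exact lt_irrefl _ this

end Brouwer

/-! ### Schauder's theorem -/

section Schauder

variable {X : Type*} [NormedAddCommGroup X] [NormedSpace ℝ X]

/-- Approximate fixed points, from Brouwer's theorem in the space of weights on a finite
`ε`-net of `K`. -/
lemma exists_dist_lt_of_mem_compact {T : X → X} (hT : Continuous T) {K : Set X}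
    (hK : IsCompact K) (hTK : ∀ x, T x ∈ K) {ε : ℝ} (hε : 0 < ε) : ∃ x, dist x (T x) < ε := by
  obtain ⟨t, -, htfin, htK⟩ := hK.finite_cover_balls hε
  have : Fintype t := htfin.fintype
  -- Unnormalised weights of the Schauder projection: `w i` is supported in the `ε`-ball about `i`.
  let w : t → X → ℝ := fun i y => max (ε - dist y i) 0
  let S : X → ℝ := fun y => ∑ i, w i y
  have hw0 : ∀ i y, 0 ≤ w i y := fun i y => le_max_right _ _
  have hwc : ∀ i, Continuous (w i) := fun i => by fun_prop
  have hSc : Continuous S := continuous_finsetSum _ fun i _ => hwc i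
  have hS : ∀ y ∈ K, 0 < S y := by
    intro y hy
    obtain ⟨i, hi, hyi⟩ := Set.mem_iUnion₂.1 (htK hy)
    refine Finset.sum_pos' (fun i _ => hw0 i y) ⟨⟨i, hi⟩, Finset.mem_univ _, ?_⟩
    exact lt_max_of_lt_left (sub_pos.2 (mem_ball.1 hyi))
  let φ : X → EuclideanSpace ℝ t := fun y => WithLp.toLp 2 fun i => w i y / S y
  have hφ : ContinuousOn φ K := by
    refine (PiLp.continuous_toLp 2 _).comp_continuousOn (continuousOn_pi.2 fun i => ?_)
    exact (hwc i).continuousOn.div hSc.continuousOn fun y hy => (hS y hy).ne'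
  obtain ⟨R, hR⟩ := (hK.image_of_continuousOn hφ).isBounded.exists_norm_le
  let e : EuclideanSpace ℝ t → X := fun a => ∑ i, a i • (i : X)
  have he : Continuous e := by fun_prop
  have hf : Continuous fun a => φ (T (e a)) :=
    hφ.comp_continuous (hT.comp he) fun a => hTK _
  obtain ⟨a, ha⟩ := exists_fixedPoint_of_bounded hf fun a =>
    hR _ (Set.mem_image_of_mem φ (hTK _))
  refine ⟨e a, ?_⟩
  -- `e a` is a convex combination of net points within `ε` of `y = T (e a)`.
  set y := T (e a) with hy
  have hyS : 0 < S y := hS y (hTK _)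
  have hmem : e a ∈ ball y ε := by
    have ha' : ∀ i, a i = w i y / S y := fun i => (congrArg (fun b => b i) ha).symm
    have h := (convex_ball y ε).finsum_mem (w := fun i => a i) (z := fun i : t => (i : X))
      (fun i => ?_) ?_ fun i hi => ?_
    · rwa [finsum_eq_sum_of_fintype] at h
    · rw [ha']; exact div_nonneg (hw0 i y) hyS.le
    · simp only [finsum_eq_sum_of_fintype, ha']
      rw [← Finset.sum_div]
      exact div_self hyS.ne'
    · by_contra hfar
      refine hi ?_
      have : ε ≤ dist y i := by simpa [dist_comm] using hfar
      rw [ha', show w i y = 0 from max_eq_right (sub_nonpos.2 this), zero_div]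
  exact hmem

/-- Schauder's theorem for maps of the whole space into a compact set. -/
lemma exists_fixedPoint_of_mem_compact {T : X → X} (hT : Continuous T) {K : Set X}
    (hK : IsCompact K) (hTK : ∀ x, T x ∈ K) : ∃ x, T x = x := by
  choose x hx using fun n : ℕ =>
    exists_dist_lt_of_mem_compact hT hK hTK (Nat.one_div_pos_of_nat (α := ℝ) (n := n))
  obtain ⟨y, -, φ, hφ, hy⟩ := hK.tendsto_subseq fun n => hTK (x n)
  have hd : Tendsto (fun n => dist (x n) (T (x n))) atTop (nhds 0) :=
    squeeze_zero (fun _ => dist_nonneg) (fun n => (hx n).le) tendsto_one_div_add_atTop_nhds_zero_nat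
  have hxy : Tendsto (x ∘ φ) atTop (nhds y) :=
    (tendsto_iff_of_dist (hd.comp hφ.tendsto_atTop)).2 hy
  exact ⟨y, tendsto_nhds_unique ((hT.tendsto y).comp hxy) hy⟩

/-- Schauder's theorem on a closed ball. -/
lemma exists_fixedPoint_closedBall {r : ℝ} (hr : 0 < r) {T : X → X}
    (hT : ContinuousOn T (closedBall 0 r)) {K : Set X} (hK : IsCompact K)
    (hTK : Set.MapsTo T (closedBall 0 r) K) (hKr : K ⊆ closedBall 0 r) :
    ∃ x ∈ closedBall (0 : X) r, T x = x := by
  have hpos : ∀ x : X, 0 < max r ‖x‖ := fun x => lt_max_of_lt_left hr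
  -- The radial retraction onto the closed ball.
  let ϖ : X → X := fun x => (r / max r ‖x‖) • x
  have hc : Continuous ϖ := by
    refine Continuous.smul (continuous_const.div (by fun_prop) fun x => (hpos x).ne') continuous_id
  have hmem : ∀ x, ϖ x ∈ closedBall (0 : X) r := fun x => by
    rw [mem_closedBall_zero_iff, norm_smul, norm_div, Real.norm_of_nonneg hr.le,
      Real.norm_of_nonneg (hpos x).le, div_mul_eq_mul_div, div_le_iff₀ (hpos x)]
    gcongr
    exact le_max_right _ _
  obtain ⟨x, hx⟩ := exists_fixedPoint_of_mem_compact (hT.comp_continuous hc hmem) hK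
    fun x => hTK (hmem x)
  have hxr : x ∈ closedBall (0 : X) r := hx ▸ hKr (hTK (hmem x))
  have hϖ : ϖ x = x := by
    simp only [ϖ]
    rw [max_eq_left (mem_closedBall_zero_iff.1 hxr), div_self hr.ne', one_smul]
  exact ⟨x, hxr, by rwa [Function.comp_apply, hϖ] at hx⟩

end Schauder

/-- If `M = B_X(0,r)` and `F₂(M)` is contained in a compact subset of
the closed ball of radius `r/‖(I-F₁)⁻¹‖`, then the invariance condition holds and
`F₁ + F₂` has a fixed point in `M`. -/
theorem stmt_5 {X : Type*} [NormedAddCommGroup X] [NormedSpace ℝ X] [CompleteSpace X]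
    (F₁ : X →L[ℝ] X) (ρ : ℝ)
    (hρ : Tendsto (fun k : ℕ => ‖F₁ ^ k‖ ^ ((1 : ℝ) / k)) atTop (nhds ρ))
    (hρ1 : ρ < 1)
    (G : X →L[ℝ] X) (hG1 : G * (1 - F₁) = 1) (hG2 : (1 - F₁) * G = 1)
    (r : ℝ) (hr : 0 < r)
    (F₂ : X → X) (hF₂c : ContinuousOn F₂ (closedBall (0 : X) r))
    (K : Set X) (hK : IsCompact K) (hK1 : F₂ '' closedBall (0 : X) r ⊆ K)
    (hK2 : K ⊆ closedBall (0 : X) (r / ‖G‖)) :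
    (∀ x y : X, y ∈ closedBall (0 : X) r → x = F₁ x + F₂ y →
      x ∈ closedBall (0 : X) r) ∧
    ∃ x ∈ closedBall (0 : X) r, F₁ x + F₂ x = x := by
  have hmap : ∀ k ∈ K, ‖G k‖ ≤ r := fun k hk => by
    have h1 := mem_closedBall_zero_iff.1 (hK2 hk)
    have h2 : ‖G‖ * (r / ‖G‖) ≤ r := by
      rcases (norm_nonneg G).eq_or_lt with h | h
      -- If `G = 0`, then `r / ‖G‖ = 0` and the product is `0 ≤ r`.
      · simp [← h, hr.le]
      · exact (mul_div_cancel₀ r h.ne').le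
    exact (G.le_opNorm_of_le h1).trans h2
  have hl : ∀ x, G (x - F₁ x) = x := fun x => by
    simpa using congrArg (fun T : X →L[ℝ] X => T x) hG1
  have hrt : ∀ x, G x - F₁ (G x) = x := fun x => by
    simpa using congrArg (fun T : X →L[ℝ] X => T x) hG2
  constructor
  · intro x y hy hxy
    have : x = G (F₂ y) := by
      rw [← hl x, sub_eq_iff_eq_add'.2 hxy]
    rw [mem_closedBall_zero_iff, this]
    exact hmap _ (hK1 ⟨y, hy, rfl⟩)
  · obtain ⟨x, hx, hGx⟩ := exists_fixedPoint_closedBall hr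
      (G.continuous.comp_continuousOn hF₂c) (hK.image G.continuous)
      (fun y hy => ⟨_, hK1 ⟨y, hy, rfl⟩, rfl⟩)
      (by rintro _ ⟨k, hk, rfl⟩; exact mem_closedBall_zero_iff.2 (hmap k hk))
    refine ⟨x, hx, ?_⟩
    have h := hrt (F₂ x)
    rw [show G (F₂ x) = x from hGx] at h
    rw [← h]; abel
end
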